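/- Let φ : ℕ → ℕ be injective and for each integer M ≥ 4 let K_M = ∫₀^∞ g_M(α) ln α dα. Then the series Σ_{M=4}^∞ 2^(−φ(M)) · g_M(α)/K_M converges uniformly on ℝ, its sum g* is continuous and nonnegative, g* vanishes on (−∞, 2], g* is integrable on [0, ∞), and ∫₀^∞ g*(α) dα > 0. -/

import Mathlib

open Filter MeasureTheory

/-- For `M ≥ 4`, the function `g_M` from Lemma 1 of the paper. -/
noncomputable def gM (M : ℕ) (α : ℝ) : ℝ :=
  if α ≤ 2 then 0
  else if α ≤ 3 then (α - 2) / (3 * (Real.log 3) ^ 2)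
  else if α ≤ M then 1 / (α * (Real.log α) ^ 2)
  else if α ≤ M + 1 then ((M : ℝ) + 1 - α) / (M * (Real.log M) ^ 2)
  else 0

/-- `K_M = ∫₀^∞ g_M(α) ln α dα`. -/
noncomputable def Kconst (M : ℕ) : ℝ :=
  ∫ α in Set.Ioi (0 : ℝ), gM M α * Real.log α


lemma gM_closed (M : ℕ) (hM : 4 ≤ M) (α : ℝ) :
    gM M α = max 0 (min 1 (min (α - 2) ((M : ℝ) + 1 - α))) *
      (1 / (max 3 (min α M) * (Real.log (max 3 (min α M))) ^ 2)) := by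
  have hM' : (4 : ℝ) ≤ M := by exact_mod_cast hM
  unfold gM
  split_ifs with h1 h2 h3 h4
  · rw [max_eq_left]
    · simp
    · exact (min_le_right _ _).trans ((min_le_left _ _).trans (by linarith))
  · push Not at h1
    rw [min_eq_left (show α - 2 ≤ (M : ℝ) + 1 - α by linarith),
      min_eq_right (show α - 2 ≤ 1 by linarith), max_eq_right (by linarith),
      min_eq_left (show α ≤ M by linarith), max_eq_left h2]
    ring
  · push Not at h1 h2
    rw [min_eq_left (show (1 : ℝ) ≤ min (α - 2) ((M : ℝ) + 1 - α) from
        le_min (by linarith) (by linarith)), max_eq_right (by linarith),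
      min_eq_left h3, max_eq_right h2.le]
    ring
  · push Not at h1 h2 h3
    rw [min_eq_right (show (M : ℝ) + 1 - α ≤ α - 2 by linarith),
      min_eq_right (show (M : ℝ) + 1 - α ≤ 1 by linarith), max_eq_right (by linarith),
      min_eq_right h3.le, max_eq_right (show (3 : ℝ) ≤ M by linarith)]
    ring
  · push Not at h4
    rw [max_eq_left]
    · simp
    · exact (min_le_right _ _).trans ((min_le_right _ _).trans (by linarith))

lemma one_le_log_of_three_le {x : ℝ} (hx : 3 ≤ x) : 1 ≤ Real.log x := by
  rw [Real.le_log_iff_exp_le (by linarith)]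
  exact (Real.exp_one_lt_d9.le.trans (by norm_num)).trans hx

lemma gM_cont (M : ℕ) (hM : 4 ≤ M) : Continuous (gM M) := by
  have : gM M = fun α => _ := funext (gM_closed M hM)
  rw [this]
  have h3 : ∀ α : ℝ, (3 : ℝ) ≤ max 3 (min α M) := fun α => le_max_left _ _
  have hc : Continuous fun α : ℝ => max 3 (min α (M : ℝ)) := by fun_prop
  refine Continuous.mul (by fun_prop) (Continuous.div continuous_const ?_ ?_)
  · exact hc.mul ((hc.log fun α => by linarith [h3 α]).pow 2)
  · intro α
    have := h3 α
    have := one_le_log_of_three_le (h3 α)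
    positivity

lemma gM_nonneg (M : ℕ) (hM : 4 ≤ M) (α : ℝ) : 0 ≤ gM M α := by
  rw [gM_closed M hM]
  have : (3 : ℝ) ≤ max 3 (min α M) := le_max_left _ _
  positivity

lemma gM_le_one (M : ℕ) (hM : 4 ≤ M) (α : ℝ) : gM M α ≤ 1 := by
  rw [gM_closed M hM]
  have h3 : (3 : ℝ) ≤ max 3 (min α M) := le_max_left _ _
  have hl := one_le_log_of_three_le h3
  refine mul_le_one₀ (max_le zero_le_one (min_le_left _ _)) (by positivity) ?_
  rw [div_le_one (by positivity)]
  nlinarith [one_le_pow₀ hl (n := 2)]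

lemma gM_zero (M : ℕ) (α : ℝ) (h : α ≤ 2) : gM M α = 0 := by
  simp [gM, h]

lemma gM_zero_right (M : ℕ) (hM : 4 ≤ M) (α : ℝ) (h : (M : ℝ) + 1 ≤ α) : gM M α = 0 := by
  rw [gM_closed M hM, max_eq_left]
  · simp
  · exact (min_le_right _ _).trans ((min_le_right _ _).trans (by linarith))

lemma gM_mid (M : ℕ) (α : ℝ) (h : 2 < α) (h' : α < 3) :
    gM M α = (α - 2) / (3 * (Real.log 3) ^ 2) := by
  simp [gM, not_le.2 h, h'.le]

lemma gM_int (M : ℕ) (hM : 4 ≤ M) : Integrable (gM M) := by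
  refine (gM_cont M hM).integrable_of_hasCompactSupport ?_
  refine HasCompactSupport.intro (isCompact_Icc (a := (2 : ℝ)) (b := M + 1)) ?_
  intro x hx
  by_cases h : x ≤ 2
  · exact gM_zero M x h
  · exact gM_zero_right M hM x (by
      by_contra h2
      exact hx ⟨by linarith, by linarith⟩)

lemma gM_log_nonneg (M : ℕ) (hM : 4 ≤ M) (α : ℝ) : 0 ≤ gM M α * Real.log α := by
  by_cases h : α ≤ 2
  · simp [gM_zero M α h]
  · exact mul_nonneg (gM_nonneg M hM α) (Real.log_nonneg (by linarith))

lemma gM_log_int (M : ℕ) (hM : 4 ≤ M) : Integrable (fun α => gM M α * Real.log α) := by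
  refine ((gM_int M hM).mul_const ((M : ℝ) + 1)).mono'
    ((gM_cont M hM).measurable.mul Real.measurable_log).aestronglyMeasurable ?_
  refine Eventually.of_forall fun α => ?_
  rw [Real.norm_of_nonneg (gM_log_nonneg M hM α)]
  by_cases h : α ≤ 2
  · simp [gM_zero M α h]
  by_cases h2 : (M : ℝ) + 1 ≤ α
  · simp [gM_zero_right M hM α h2]
  · refine mul_le_mul_of_nonneg_left ?_ (gM_nonneg M hM α)
    have := Real.log_le_sub_one_of_pos (x := α) (by linarith)
    linarith

lemma pos_of_pos_mid (f : ℝ → ℝ) (h0 : ∀ x, 0 ≤ f x) (hi : Integrable f)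
    (hp : ∀ x ∈ Set.Ioo (2 : ℝ) 3, 0 < f x) : 0 < ∫ x in Set.Ioo (2 : ℝ) 3, f x := by
  rw [setIntegral_pos_iff_support_of_nonneg_ae (Eventually.of_forall h0) hi.integrableOn]
  have : Function.support f ∩ Set.Ioo (2 : ℝ) 3 = Set.Ioo 2 3 :=
    Set.inter_eq_right.2 fun x hx => (hp x hx).ne'
  rw [this, Real.volume_Ioo]
  norm_num

lemma mid_le (f : ℝ → ℝ) (h0 : ∀ x, 0 ≤ f x) (hi : Integrable f) :
    ∫ x in Set.Ioo (2 : ℝ) 3, f x ≤ ∫ x in Set.Ioi (0 : ℝ), f x := by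
  refine setIntegral_mono_set hi.integrableOn (Eventually.of_forall h0) ?_
  refine HasSubset.Subset.eventuallyLE fun x hx => ?_
  exact lt_trans (by norm_num) hx.1

lemma gM_mid_pos (M : ℕ) (x : ℝ) (hx : x ∈ Set.Ioo (2 : ℝ) 3) : 0 < gM M x := by
  rw [gM_mid M x hx.1 hx.2]
  have := one_le_log_of_three_le le_rfl
  have := hx.1
  exact div_pos (by linarith) (by positivity)

lemma K_lower : ∃ c : ℝ, 0 < c ∧ ∀ M : ℕ, 4 ≤ M → c ≤ Kconst M := by
  refine ⟨∫ x in Set.Ioo (2 : ℝ) 3, gM 4 x * Real.log x, ?_, ?_⟩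
  · exact pos_of_pos_mid _ (gM_log_nonneg 4 le_rfl) (gM_log_int 4 le_rfl) fun x hx =>
      mul_pos (gM_mid_pos 4 x hx) (Real.log_pos (by linarith [hx.1]))
  · intro M hM
    refine le_trans (le_of_eq ?_) (mid_le _ (gM_log_nonneg M hM) (gM_log_int M hM))
    refine setIntegral_congr_fun measurableSet_Ioo fun x hx => ?_
    simp only [gM_mid _ x hx.1 hx.2]

lemma int_le_K (M : ℕ) (hM : 4 ≤ M) :
    ∫ x in Set.Ioi (0 : ℝ), gM M x ≤ Kconst M / Real.log 2 := by
  have hl : 0 < Real.log 2 := Real.log_pos (by norm_num)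
  rw [le_div_iff₀ hl, ← integral_mul_const]
  refine integral_mono ((gM_int M hM).integrableOn.mul_const _)
    (gM_log_int M hM).integrableOn fun x => ?_
  by_cases h : x ≤ 2
  · simp [gM_zero M x h]
  · exact mul_le_mul_of_nonneg_left (Real.log_le_log (by norm_num) (by linarith))
      (gM_nonneg M hM x)

/-- For injective `φ`, the series `Σ_{M≥4} 2^{-φ(M)} g_M/K_M` converges uniformly
on `ℝ`; its sum `g*` is continuous, nonnegative, vanishes on `(-∞, 2]`, is
integrable on `[0,∞)`, and `∫₀^∞ g* > 0`. -/
theorem stmt18 (φ : ℕ → ℕ) (hinj : Function.Injective φ)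
    (gstar : ℝ → ℝ)
    (hgstar : ∀ α, gstar α =
      ∑' k : ℕ, (2 : ℝ) ^ (-(φ (k + 4) : ℤ)) * gM (k + 4) α / Kconst (k + 4)) :
    TendstoUniformly
      (fun N α => ∑ k ∈ Finset.range N,
        (2 : ℝ) ^ (-(φ (k + 4) : ℤ)) * gM (k + 4) α / Kconst (k + 4))
      gstar atTop ∧
    Continuous gstar ∧
    (∀ α, 0 ≤ gstar α) ∧
    (∀ α : ℝ, α ≤ 2 → gstar α = 0) ∧
    IntegrableOn gstar (Set.Ici (0 : ℝ)) ∧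
    0 < ∫ α in Set.Ioi (0 : ℝ), gstar α := by
  obtain ⟨c, hc, hK⟩ := K_lower
  set F : ℕ → ℝ → ℝ := fun k α =>
    (2 : ℝ) ^ (-(φ (k + 4) : ℤ)) * gM (k + 4) α / Kconst (k + 4) with hF
  have h4 : ∀ k : ℕ, 4 ≤ k + 4 := fun k => by omega
  have hK' : ∀ k : ℕ, c ≤ Kconst (k + 4) := fun k => hK _ (h4 k)
  have hKp : ∀ k : ℕ, 0 < Kconst (k + 4) := fun k => hc.trans_le (hK' k)
  have hw : Summable fun k : ℕ => (2 : ℝ) ^ (-(φ (k + 4) : ℤ)) := by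
    have h1 : Function.Injective fun k : ℕ => φ (k + 4) := fun a b h => by
      have := hinj h
      omega
    have h2 := summable_geometric_two.comp_injective h1
    refine h2.congr fun k => ?_
    simp [zpow_neg]
  have hF0 : ∀ k α, 0 ≤ F k α := fun k α =>
    div_nonneg (mul_nonneg (by positivity) (gM_nonneg _ (h4 k) α)) (hKp k).le
  have hFb : ∀ k α, ‖F k α‖ ≤ (2 : ℝ) ^ (-(φ (k + 4) : ℤ)) / c := fun k α => by
    rw [Real.norm_of_nonneg (hF0 k α)]
    refine div_le_div₀ (by positivity) ?_ hc (hK' k)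
    exact mul_le_of_le_one_right (by positivity) (gM_le_one _ (h4 k) α)
  have hFc : ∀ k, Continuous (F k) := fun k =>
    (continuous_const.mul (gM_cont _ (h4 k))).div_const _
  have hg : gstar = fun α => ∑' k, F k α := funext hgstar
  have hFi : ∀ k, Integrable (F k) := fun k => ((gM_int _ (h4 k)).const_mul _).div_const _
  have hFI : ∀ k, ∫ x in Set.Ioi (0 : ℝ), F k x ≤
      (2 : ℝ) ^ (-(φ (k + 4) : ℤ)) / Real.log 2 := fun k => by
    simp only [hF]
    rw [integral_div, integral_const_mul, div_le_iff₀ (hKp k)]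
    refine (mul_le_mul_of_nonneg_left (int_le_K _ (h4 k)) (by positivity)).trans (le_of_eq ?_)
    ring
  have hnn : ∀ α, 0 ≤ gstar α := fun α => by
    rw [hg]
    exact tsum_nonneg fun k => hF0 k α
  have hFIn : Summable fun k => ∫ x in Set.Ioi (0 : ℝ), ‖F k x‖ := by
    refine Summable.of_nonneg_of_le (fun k => integral_nonneg fun x => norm_nonneg _) ?_
      (hw.div_const (Real.log 2))
    intro k
    simp only [Real.norm_of_nonneg (hF0 k _)]
    exact hFI k
  have hcont : Continuous gstar := by
    rw [hg]
    exact continuous_tsum hFc (hw.div_const c) hFb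
  have hsum := hasSum_integral_of_summable_integral_norm
    (fun k => (hFi k).integrableOn) hFIn
  have hFpos : ∀ k, 0 < ∫ x in Set.Ioi (0 : ℝ), F k x := fun k =>
    (pos_of_pos_mid _ (hF0 k) (hFi k) fun x hx =>
      div_pos (mul_pos (by positivity) (gM_mid_pos _ x hx)) (hKp k)).trans_le
      (mid_le _ (hF0 k) (hFi k))
  have hpos : 0 < ∫ α in Set.Ioi (0 : ℝ), gstar α := by
    rw [hg, ← hsum.tsum_eq]
    exact hsum.summable.tsum_pos (fun k => (hFpos k).le) 0 (hFpos 0)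
  refine ⟨?_, hcont, hnn, ?_, ?_, hpos⟩
  · rw [hg]
    exact tendstoUniformly_tsum_nat (hw.div_const c) hFb
  · intro α h
    rw [hg]
    simp [hF, gM_zero _ α h]
  · rw [integrableOn_Ici_iff_integrableOn_Ioi]
    by_contra h
    rw [integral_undef h] at hpos
    exact lt_irrefl _ hpos
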